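/- Let q ∈ ℕ∪{0}, d, d*, K ∈ ℕ, α ∈ (0,∞), τ ∈ (0,∞], β ∈ (0,∞), Λ ∈ (1,∞). Assume d*·q ≤ K·q, d* ≤ d, and not both α < 1 and τ ≥ 1. Then there exists a constant c ∈ (0,∞) depending only on (β,Λ) such that for every r ∈ [c,∞) and every integer n ≥ 1/(Λ−1): inf_{f̂_n} sup{E_{P^⊗n}[E_P(f̂_n)] : P ∈ H^{d,β,r,Λ}_{q,K,d*} ∩ T^{d,∞}_{α,τ}} ≥ 1/(32·n), where the infimum is over all estimators based on the i.i.d. sample of size n. -/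

import Mathlib

open MeasureTheory ENNReal Set

noncomputable section

namespace ZZS

/-! ## Basic geometry -/

/-- The closed unit cube `[0,1]^m`. -/
def cube (m : ℕ) : Set (Fin m → ℝ) := Set.univ.pi fun _ => Set.Icc (0 : ℝ) 1

/-- The open unit cube `(0,1)^m`. -/
def cubeo (m : ℕ) : Set (Fin m → ℝ) := Set.univ.pi fun _ => Set.Ioo (0 : ℝ) 1

/-- The label set `{-1, 1} ⊆ ℝ`. -/
def labels : Set ℝ := {-1, 1}

/-- Euclidean distance on `Fin m → ℝ`. -/
def e2 {m : ℕ} (x z : Fin m → ℝ) : ℝ := Real.sqrt (∑ i, (x i - z i) ^ 2)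

/-! ## Multi-index partial derivatives and Hölder balls -/

/-- Iterated partial derivative along a list of coordinate directions. -/
def pderivList {m : ℕ} : List (Fin m) → ((Fin m → ℝ) → ℝ) → (Fin m → ℝ) → ℝ
  | [], f => f
  | i :: l, f => pderivList l fun x => fderiv ℝ f x (Pi.single i 1)

/-- The canonical list of directions attached to a multi-index. -/
def idxList {m : ℕ} (u : Fin m → ℕ) : List (Fin m) :=
  (List.finRange m).flatMap fun i => List.replicate (u i) i

/-- The partial derivative `D^u f` for a multi-index `u`. -/
def Dm {m : ℕ} (u : Fin m → ℕ) (f : (Fin m → ℝ) → ℝ) : (Fin m → ℝ) → ℝ :=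
  pderivList (idxList u) f

/-- The order `‖u‖₁` of a multi-index `u`. -/
def mord {m : ℕ} (u : Fin m → ℕ) : ℕ := ∑ i, u i

/-- The Hölder-`β` norm of `f`, suprema taken over the set `S` (value in `ℝ≥0∞`). -/
def holderNormOn (m : ℕ) (β : ℝ) (S : Set (Fin m → ℝ)) (f : (Fin m → ℝ) → ℝ) : ℝ≥0∞ :=
  (⨆ (u : Fin m → ℕ) (_ : (mord u : ℝ) < β) (x ∈ S), ENNReal.ofReal |Dm u f x|) +
    ⨆ (u : Fin m → ℕ) (_ : (⌈β⌉ : ℝ) - 1 ≤ (mord u : ℝ) ∧ (mord u : ℝ) < β)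
      (x ∈ S) (z ∈ S) (_ : x ≠ z),
      ENNReal.ofReal |Dm u f x - Dm u f z| /
        ENNReal.ofReal (e2 x z) ^ (β + 1 - (⌈β⌉ : ℝ))

/-- `⌈β - 1⌉`, the number of derivatives required for Hölder-`β` smoothness. -/
def smoothOrder (β : ℝ) : ℕ := ⌈β - 1⌉₊

/-- The Hölder ball `B^β_r([0,1]^m)`:  `⌈β-1⌉`-times continuously differentiable functions on
the interior of the cube (with uniformly continuous derivatives, so that they extend
continuously), with Hölder-`β` norm at most `r`. -/
def HolderBall (m : ℕ) (β r : ℝ) : Set ((Fin m → ℝ) → ℝ) :=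
  {f | ContinuousOn f (cube m) ∧
    ContDiffOn ℝ (smoothOrder β : ℕ∞) f (cubeo m) ∧
    (∀ u : Fin m → ℕ, (mord u : ℝ) < β → UniformContinuousOn (Dm u f) (cubeo m)) ∧
    holderNormOn m β (cubeo m) f ≤ ENNReal.ofReal r}

/-! ## Compositional function classes -/

/-- `G^H_m(dstar, β, r)`: Hölder-`β` functions of `dstar` of the `m` coordinates. -/
def GH (m dstar : ℕ) (β r : ℝ) : Set ((Fin m → ℝ) → ℝ) :=
  {f | ∃ (e : Fin dstar → Fin m) (g : (Fin dstar → ℝ) → ℝ),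
    StrictMono e ∧ g ∈ HolderBall dstar β r ∧ ∀ x ∈ cube m, f x = g fun j => x (e j)}

/-- `G^M_m(dmax)`: maxima of at most `dmax` coordinates. -/
def GM (m dmax : ℕ) : Set ((Fin m → ℝ) → ℝ) :=
  {f | ∃ (I : Finset (Fin m)) (hI : I.Nonempty), I.card ≤ dmax ∧
    ∀ x ∈ cube m, f x = I.sup' hI fun i => x i}

/-- The compositional class `G^CHOM_d(q, K, dmax, dstar, β, r)`. -/
def GCHOM (K dmax dstar : ℕ) (β r : ℝ) : ℕ → (d : ℕ) → Set ((Fin d → ℝ) → ℝ)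
  | 0, d => {f | ∃ h ∈ GH d dstar β r ∪ GM d dmax, ∀ x ∈ cube d, f x = h x}
  | q + 1, d =>
    {f | ∃ (H : (Fin d → ℝ) → Fin K → ℝ) (g : (Fin K → ℝ) → ℝ),
      (∀ j, (fun x => H x j) ∈ GH d dstar β r ∪ GM d dmax) ∧
      (∀ x ∈ cube d, H x ∈ cube K) ∧
      g ∈ GCHOM K dmax dstar β r q K ∧ ∀ x ∈ cube d, f x = g (H x)}

/-- The compositional class `G^CH_d(q, K, dstar, β, r)` (no max-value components). -/
def GCH (K dstar : ℕ) (β r : ℝ) : ℕ → (d : ℕ) → Set ((Fin d → ℝ) → ℝ)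
  | 0, d => {f | ∃ h ∈ GH d dstar β r, ∀ x ∈ cube d, f x = h x}
  | q + 1, d =>
    {f | ∃ (H : (Fin d → ℝ) → Fin K → ℝ) (g : (Fin K → ℝ) → ℝ),
      (∀ j, (fun x => H x j) ∈ GH d dstar β r) ∧
      (∀ x ∈ cube d, H x ∈ cube K) ∧
      g ∈ GCH K dstar β r q K ∧ ∀ x ∈ cube d, f x = g (H x)}

/-! ## Losses, risks, and data distributions -/

/-- The sign function (`sgn 0 = 1`). -/
def sgn (t : ℝ) : ℝ := if 0 ≤ t then 1 else -1

/-- The hinge loss. -/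
def hinge (t : ℝ) : ℝ := max 0 (1 - t)

/-- The truncation operator `T_F`. -/
def trunc (F t : ℝ) : ℝ := min F (max (-F) t)

/-- The joint distribution `P_{η,Q}` on `[0,1]^d × {-1,1}` with input marginal `Q` and
conditional class probability function `η`. -/
def jointMeasure {d : ℕ} (η : (Fin d → ℝ) → ℝ) (Q : Measure (Fin d → ℝ)) :
    Measure ((Fin d → ℝ) × ℝ) :=
  Q.bind fun x =>
    ENNReal.ofReal (η x) • Measure.dirac (x, (1 : ℝ)) +
      ENNReal.ofReal (1 - η x) • Measure.dirac (x, (-1 : ℝ))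

/-- The 0-1 risk (misclassification error). -/
def risk01 {d : ℕ} (P : Measure ((Fin d → ℝ) × ℝ)) (f : (Fin d → ℝ) → ℝ) : ℝ :=
  (P {p | sgn (f p.1) ≠ p.2}).toReal

/-- The infimum of the 0-1 risk over all measurable functions. -/
def bayes01 {d : ℕ} (P : Measure ((Fin d → ℝ) × ℝ)) : ℝ :=
  ⨅ g : {g : (Fin d → ℝ) → ℝ // Measurable g}, risk01 P g.1

/-- The excess 0-1 risk. -/
def excess01 {d : ℕ} (P : Measure ((Fin d → ℝ) × ℝ)) (f : (Fin d → ℝ) → ℝ) : ℝ :=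
  risk01 P f - bayes01 P

/-- The `φ`-risk. -/
def riskPhi {d : ℕ} (φ : ℝ → ℝ) (P : Measure ((Fin d → ℝ) × ℝ)) (f : (Fin d → ℝ) → ℝ) : ℝ :=
  ∫ p, φ (p.2 * f p.1) ∂P

/-- The infimum of the `φ`-risk over all measurable functions. -/
def bayesPhi {d : ℕ} (φ : ℝ → ℝ) (P : Measure ((Fin d → ℝ) × ℝ)) : ℝ :=
  ⨅ g : {g : (Fin d → ℝ) → ℝ // Measurable g}, riskPhi φ P g.1

/-- The excess `φ`-risk. -/
def excessPhi {d : ℕ} (φ : ℝ → ℝ) (P : Measure ((Fin d → ℝ) × ℝ)) (f : (Fin d → ℝ) → ℝ) : ℝ :=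
  riskPhi φ P f - bayesPhi φ P

/-- A Borel probability measure on `[0,1]^d × {-1,1}`, presented by its input marginal `Q`
(a Borel probability measure concentrated on the cube) and its conditional class
probability function `η` (measurable, `[0,1]`-valued);  the measure itself is
`jointMeasure η Q`. -/
structure DataDist (d : ℕ) where
  η : (Fin d → ℝ) → ℝ
  Q : Measure (Fin d → ℝ)
  η_meas : Measurable η
  η_mem : ∀ x, η x ∈ Set.Icc (0 : ℝ) 1
  Q_prob : IsProbabilityMeasure Q
  Q_cube : Q (cube d) = 1

/-- The measure on `[0,1]^d × {-1,1}` associated with a `DataDist`. -/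
def DataDist.P {d : ℕ} (D : DataDist d) : Measure ((Fin d → ℝ) × ℝ) := jointMeasure D.η D.Q

/-- `x ^ s` for `s ∈ [0,∞]`, with the conventions `x ^ ∞ = 0` for `x < 1` and `1 ^ ∞ = 1`. -/
def rpowE (x : ℝ≥0∞) (s : ℝ≥0∞) : ℝ≥0∞ :=
  if s = ∞ then (if x < 1 then 0 else if x = 1 then 1 else ∞) else x ^ s.toReal

/-- The Tsybakov noise class `T^{d,s}_{α,τ}` (noise exponent `s ∈ [0,∞]`,
threshold `τ ∈ (0,∞]`). -/
def Tsybakov (d : ℕ) (s : ℝ≥0∞) (α : ℝ) (τ : ℝ≥0∞) : Set (DataDist d) :=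
  {P | ∀ t : ℝ, 0 < t → ENNReal.ofReal t ≤ τ →
    P.Q ({x | |2 * P.η x - 1| ≤ t} ∩ cube d) ≤ ENNReal.ofReal α * rpowE (ENNReal.ofReal t) s}

/-- The class `H^{d,β,r}_{q,K,dstar,dmax}`: distributions whose conditional class probability
agrees a.s. with a member of `G^CHOM`. -/
def HCHOM (d q K dstar dmax : ℕ) (β r : ℝ) : Set (DataDist d) :=
  {P | ∃ f ∈ GCHOM K dmax dstar β r q d, ∀ᵐ x ∂P.Q, P.η x = f x}

/-- `M_{Λ,d}`: Borel probability measures on `[0,1]^d` with a `[0,Λ]`-valued density with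
respect to Lebesgue measure. -/
def MLam (d : ℕ) (Λ : ℝ) : Set (Measure (Fin d → ℝ)) :=
  {Q | ∃ g : (Fin d → ℝ) → ℝ, Measurable g ∧ (∀ x, g x ∈ Set.Icc 0 Λ) ∧
    Q = (volume.restrict (cube d)).withDensity fun x => ENNReal.ofReal (g x)}

/-- The class `H^{d,β,r,Λ}_{q,K,dstar}`: joint laws `P_{η,Q}` with `η ∈ G^CH` (valued in
`[0,1]`) and `Q ∈ M_{Λ,d}`. -/
def HCHL (d q K dstar : ℕ) (β r Λ : ℝ) : Set (DataDist d) :=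
  {P | (∃ f ∈ GCH K dstar β r q d, (∀ x ∈ cube d, f x ∈ Set.Icc (0 : ℝ) 1) ∧
      ∀ᵐ x ∂P.Q, P.η x = f x) ∧ P.Q ∈ MLam d Λ}

/-- The class `H^{d,β,r}_{q,K,dstar}`: joint laws `P_{η,Q}` with `η ∈ G^CH` (valued in
`[0,1]`) and `Q` an arbitrary Borel probability measure on the cube. -/
def HCH (d q K dstar : ℕ) (β r : ℝ) : Set (DataDist d) :=
  {P | ∃ f ∈ GCH K dstar β r q d, (∀ x ∈ cube d, f x ∈ Set.Icc (0 : ℝ) 1) ∧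
    ∀ᵐ x ∂P.Q, P.η x = f x}

/-! ## Samples and estimators -/

/-- The law of an i.i.d. sample of size `n` from `μ`. -/
def iid {α : Type*} [MeasurableSpace α] (μ : Measure α) : (n : ℕ) → Measure (Fin n → α)
  | 0 => Measure.dirac fun i => i.elim0
  | n + 1 => (iid μ n).bind fun p => μ.map fun a => Fin.snoc p a

/-- An estimator: a rule assigning to each sample of size `n` a function `[0,1]^d → ℝ`. -/
def Estimator (d n : ℕ) := (Fin n → (Fin d → ℝ) × ℝ) → (Fin d → ℝ) → ℝ

/-- (Joint) measurability of an estimator. -/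
def Estimator.Meas {d n : ℕ} (A : Estimator d n) : Prop :=
  Measurable fun p : (Fin n → (Fin d → ℝ) × ℝ) × (Fin d → ℝ) => A p.1 p.2

/-- The expected excess 0-1 risk `E_{P^{⊗n}}[E_P(f̂_n)]` of an estimator. -/
def expectedExcess01 {d : ℕ} (P : Measure ((Fin d → ℝ) × ℝ)) {n : ℕ} (A : Estimator d n) : ℝ :=
  ∫ ω, excess01 P (A ω) ∂iid P n

/-- The covering number `N(F, γ)` (uniform norm over `Ω`), valued in `ℝ≥0∞`. -/
def coveringNumber {X : Type*} (Ω : Set X) (F : Set (X → ℝ)) (γ : ℝ) : ℝ≥0∞ :=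
  ⨅ (A : Finset (X → ℝ))
    (_ : ↑A ⊆ F ∧ ∀ f ∈ F, ∃ g ∈ A, ∀ x ∈ Ω, |f x - g x| ≤ γ),
    (A.card : ℝ≥0∞)

/-- `f` is an empirical `φ`-risk minimizer over `F` for the sample `ω`. -/
def IsERM {d n : ℕ} (φ : ℝ → ℝ) (F : Set ((Fin d → ℝ) → ℝ))
    (ω : Fin n → (Fin d → ℝ) × ℝ) (f : (Fin d → ℝ) → ℝ) : Prop :=
  f ∈ F ∧ ∀ g ∈ F,
    (n : ℝ)⁻¹ * ∑ i, φ ((ω i).2 * f ((ω i).1)) ≤ (n : ℝ)⁻¹ * ∑ i, φ ((ω i).2 * g ((ω i).1))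

/-! ## ReLU neural networks -/

/-- A feedforward ReLU network with input dimension `d`. -/
structure ReLUNet (d : ℕ) where
  L : ℕ
  width : ℕ → ℕ
  W : (i : ℕ) → Fin (width (i + 1)) → Fin (width i) → ℝ
  v : (i : ℕ) → Fin (width i) → ℝ
  h0 : width 0 = d
  hL : width (L + 1) = 1

/-- The `i`-th intermediate layer output `W_i σ_{v_i} ⋯ W_1 σ_{v_1} W_0 x`. -/
def ReLUNet.layer {d : ℕ} (net : ReLUNet d) (x : Fin (net.width 0) → ℝ) :
    (i : ℕ) → Fin (net.width (i + 1)) → ℝ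
  | 0 => fun j => ∑ k, net.W 0 j k * x k
  | i + 1 => fun j => ∑ k, net.W (i + 1) j k * max 0 (net.layer x i k - net.v (i + 1) k)

/-- The real-valued function computed by a ReLU network. -/
def ReLUNet.eval {d : ℕ} (net : ReLUNet d) (x : Fin d → ℝ) : ℝ :=
  net.layer (fun j => x (Fin.cast net.h0 j)) net.L (Fin.cast net.hL.symm 0)

/-- The class `F^NN_d(G, N, S, B, Fb)` of ReLU networks with depth `≤ G`, widths `≤ N`,
at most `S` nonzero parameters, parameter magnitudes `≤ B`, and uniform norm on the cube
`≤ Fb`. -/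
def FNN (d : ℕ) (G N : ℝ) (S : ℝ≥0∞) (B : ℝ) (Fb : ℝ≥0∞) : Set ((Fin d → ℝ) → ℝ) :=
  {f | ∃ net : ReLUNet d,
    (∀ x, f x = net.eval x) ∧
    (net.L : ℝ) ≤ G ∧
    (∀ i ≤ net.L + 1, (net.width i : ℝ) ≤ N) ∧
    ((∑ i ∈ Finset.range (net.L + 1),
        (Nat.card {p : Fin (net.width (i + 1)) × Fin (net.width i) // net.W i p.1 p.2 ≠ 0}
          : ℝ≥0∞)) +
      ∑ i ∈ Finset.range net.L,
        (Nat.card {j : Fin (net.width (i + 1)) // net.v (i + 1) j ≠ 0} : ℝ≥0∞)) ≤ S ∧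
    (∀ i ≤ net.L, ∀ j k, |net.W i j k| ≤ B) ∧
    (∀ i, 1 ≤ i → i ≤ net.L → ∀ j, |net.v i j| ≤ B) ∧
    ∀ x ∈ cube d, ENNReal.ofReal |f x| ≤ Fb}

/-! ## Kullback–Leibler divergence -/

open Classical in
/-- The Kullback–Leibler divergence. -/
def KL {X : Type*} [MeasurableSpace X] (P Q : Measure X) : ℝ≥0∞ :=
  if P ≪ Q ∧ Integrable (fun x => Real.log (P.rnDeriv Q x).toReal) P then
    ENNReal.ofReal (∫ x, Real.log (P.rnDeriv Q x).toReal ∂P)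
  else ∞

/-- The exponent `e / (dstar/(s+1) + (1 + 1/(s+1))·e)` of the minimax rate, for noise
exponent `s ∈ [0,∞]` (equal to `1` when `s = ∞`). -/
def rateExp (dstar : ℕ) (e : ℝ) (s : ℝ≥0∞) : ℝ :=
  if s = ∞ then 1
  else e / ((dstar : ℝ) / (s.toReal + 1) + (1 + 1 / (s.toReal + 1)) * e)

/-!
A law whose labels are almost surely a function of the input is determined by its input marginal
and that function, and its Bayes risk is zero. If two such laws share the marginal `Q` and their
labels differ on a region of `Q`-mass `p`, then with probability `(1 - p) ^ n` the sample misses the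
region and does not tell them apart, while every classifier has total risk at least `p` under the
two laws. Hence every estimator has expected excess risk at least `p * (1 - p) ^ n / 2` under one of
them.

Take `Q` uniform on the cube with a gap of width `1 - Λ⁻¹` cut out in one coordinate, so that its
density is exactly `Λ`, and let the gap start at `Λ⁻¹ / (2 * n)`, so that the part of the cube below
it has mass `p = 1 / (2 * n)`. One law has constant label `1`, the other switches from `-1` to `1`
across the gap. The width of the gap does not depend on `n`, so the conditional class probabilities
are translates of one fixed smooth function, which bounds their Hölder norms in terms of `β` and `Λ`
alone.
-/

/-! ## Hölder balls -/

theorem pderivList_zero {m : ℕ} (l : List (Fin m)) : pderivList l (fun _ => 0) = fun _ => 0 := by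
  induction l with
  | nil => rfl
  | cons j l ih => simpa [pderivList] using ih

theorem fderiv_comp_eval_single {m : ℕ} (i j : Fin m) {ψ : ℝ → ℝ} (hψ : Differentiable ℝ ψ)
    (x : Fin m → ℝ) :
    fderiv ℝ (fun x : Fin m → ℝ => ψ (x i)) x (Pi.single j 1) =
      if j = i then deriv ψ (x i) else 0 := by
  have hcomp := (hψ (x i)).hasDerivAt.comp_hasFDerivAt x (hasFDerivAt_apply (𝕜 := ℝ) i x)
  have hfderiv : fderiv ℝ (fun x : Fin m → ℝ => ψ (x i)) x = _ := hcomp.fderiv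
  simp [hfderiv, Pi.single_apply, eq_comm]

theorem pderivList_comp_eval {m : ℕ} (i : Fin m) (l : List (Fin m)) {ψ : ℝ → ℝ}
    (hψ : ContDiff ℝ l.length ψ) :
    pderivList l (fun x => ψ (x i)) =
      if ∀ j ∈ l, j = i then fun x => iteratedDeriv l.length ψ (x i) else fun _ => 0 := by
  induction l generalizing ψ with
  | nil => simp [pderivList]
  | cons j l ih =>
    rw [List.length_cons, Nat.cast_add, Nat.cast_one, contDiff_succ_iff_deriv] at hψ
    obtain ⟨hdiff, -, hderiv⟩ := hψ
    simp only [pderivList, fderiv_comp_eval_single i j hdiff, List.length_cons,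
      iteratedDeriv_succ', List.forall_mem_cons]
    by_cases hj : j = i
    · simpa [hj] using ih hderiv
    · simpa [hj] using pderivList_zero l

theorem length_idxList {m : ℕ} (u : Fin m → ℕ) : (idxList u).length = mord u := by
  simp [idxList, mord, List.length_flatMap, List.sum_ofFn, ← List.ofFn_eq_map]

theorem Dm_comp_eval {m : ℕ} (i : Fin m) (u : Fin m → ℕ) {ψ : ℝ → ℝ}
    (hψ : ContDiff ℝ (mord u) ψ) :
    Dm u (fun x => ψ (x i)) =
      if ∀ j ∈ idxList u, j = i then fun x => iteratedDeriv (mord u) ψ (x i) else fun _ => 0 := by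
  rw [← length_idxList u] at hψ ⊢
  exact pderivList_comp_eval i _ hψ

theorem abs_Dm_comp_eval_le {m : ℕ} (i : Fin m) (u : Fin m → ℕ) {ψ : ℝ → ℝ}
    (hψ : ContDiff ℝ (mord u) ψ) (x : Fin m → ℝ) :
    |Dm u (fun x => ψ (x i)) x| ≤ |iteratedDeriv (mord u) ψ (x i)| := by
  rw [Dm_comp_eval i u hψ]
  split_ifs <;> simp

theorem abs_Dm_comp_eval_sub_le {m : ℕ} (i : Fin m) (u : Fin m → ℕ) {ψ : ℝ → ℝ}
    (hψ : ContDiff ℝ (mord u) ψ) (x z : Fin m → ℝ) :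
    |Dm u (fun x => ψ (x i)) x - Dm u (fun x => ψ (x i)) z| ≤
      |iteratedDeriv (mord u) ψ (x i) - iteratedDeriv (mord u) ψ (z i)| := by
  rw [Dm_comp_eval i u hψ]
  split_ifs <;> simp

theorem abs_iteratedDeriv_sub_le {ψ : ℝ → ℝ} {k : ℕ} {s : Set ℝ} {C : ℝ}
    (hψ : ContDiff ℝ (k + 1 : ℕ) ψ) (hs : Convex ℝ s)
    (hC : ∀ t ∈ s, |iteratedDeriv (k + 1) ψ t| ≤ C) {t t' : ℝ} (ht : t ∈ s) (ht' : t' ∈ s) :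
    |iteratedDeriv k ψ t - iteratedDeriv k ψ t'| ≤ C * |t - t'| :=
  hs.norm_image_sub_le_of_norm_deriv_le
    (fun t _ => hψ.differentiable_iteratedDeriv k (mod_cast k.lt_succ_self) t)
    (fun t ht => by simpa only [iteratedDeriv_succ, Real.norm_eq_abs] using hC t ht) ht' ht

theorem abs_sub_le_e2 {m : ℕ} (x z : Fin m → ℝ) (i : Fin m) : |x i - z i| ≤ e2 x z :=
  Real.abs_le_sqrt (Finset.single_le_sum (f := fun i => (x i - z i) ^ 2)
    (fun _ _ => sq_nonneg _) (Finset.mem_univ i))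

theorem abs_sub_le_e2_rpow {m : ℕ} {x z : Fin m → ℝ} {i : Fin m} (h : |x i - z i| ≤ 1)
    {γ : ℝ} (hγ0 : 0 ≤ γ) (hγ1 : γ ≤ 1) : |x i - z i| ≤ e2 x z ^ γ :=
  calc |x i - z i| = |x i - z i| ^ (1 : ℝ) := (Real.rpow_one _).symm
    _ ≤ |x i - z i| ^ γ := Real.rpow_le_rpow_of_exponent_ge' (abs_nonneg _) h hγ0 hγ1
    _ ≤ e2 x z ^ γ := Real.rpow_le_rpow (abs_nonneg _) (abs_sub_le_e2 x z i) hγ0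

theorem holderNormOn_le {m : ℕ} {β A B : ℝ} {S : Set (Fin m → ℝ)} {f : (Fin m → ℝ) → ℝ}
    (hA : ∀ u, (mord u : ℝ) < β → ∀ x ∈ S, |Dm u f x| ≤ A)
    (hB : ∀ u, (mord u : ℝ) < β → ∀ x ∈ S, ∀ z ∈ S,
      |Dm u f x - Dm u f z| ≤ B * e2 x z ^ (β + 1 - (⌈β⌉ : ℝ))) :
    holderNormOn m β S f ≤ ENNReal.ofReal A + ENNReal.ofReal B := by
  refine add_le_add (iSup₂_le fun u hu => iSup₂_le fun x hx => ofReal_le_ofReal (hA u hu x hx))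
    (iSup₂_le fun u hu => iSup₂_le fun x hx => iSup₂_le fun z hz => iSup_le fun _ =>
      ENNReal.div_le_of_le_mul ?_)
  have he : 0 ≤ e2 x z := Real.sqrt_nonneg _
  rw [ofReal_rpow_of_nonneg he (by linarith [Int.ceil_lt_add_one β]),
    ← ofReal_mul' (Real.rpow_nonneg he _)]
  exact ofReal_le_ofReal (hB u hu.2 x hx z hz)

theorem eval_mem_Icc {m : ℕ} {x : Fin m → ℝ} (hx : x ∈ cubeo m) (i : Fin m) :
    x i ∈ Icc (0 : ℝ) 1 :=
  Ioo_subset_Icc_self (hx i (mem_univ i))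

theorem comp_eval_mem_HolderBall {m : ℕ} (i : Fin m) {β C r : ℝ} {ψ : ℝ → ℝ}
    (hψ : ContDiff ℝ ⌈β⌉₊ ψ)
    (hC : ∀ k ≤ ⌈β⌉₊, ∀ t ∈ Icc (0 : ℝ) 1, |iteratedDeriv k ψ t| ≤ C) (hr : C + C ≤ r) :
    (fun x => ψ (x i)) ∈ HolderBall m β r := by
  have hC0 : 0 ≤ C := (abs_nonneg _).trans (hC 0 (Nat.zero_le _) 0 (by simp))
  have hbound (u : Fin m → ℕ) (hu : (mord u : ℝ) < β) (x) (hx : x ∈ cubeo m) :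
      |Dm u (fun x => ψ (x i)) x| ≤ C :=
    have hk : mord u ≤ ⌈β⌉₊ := (Nat.lt_ceil.2 hu).le
    (abs_Dm_comp_eval_le i u (hψ.of_le (mod_cast hk)) x).trans (hC _ hk _ (eval_mem_Icc hx i))
  have hlip (u : Fin m → ℕ) (hu : (mord u : ℝ) < β) (x) (hx : x ∈ cubeo m) (z)
      (hz : z ∈ cubeo m) :
      |Dm u (fun x => ψ (x i)) x - Dm u (fun x => ψ (x i)) z| ≤ C * |x i - z i| :=
    have hk : mord u + 1 ≤ ⌈β⌉₊ := Nat.lt_ceil.2 hu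
    (abs_Dm_comp_eval_sub_le i u (hψ.of_le (mod_cast (Nat.lt_ceil.2 hu).le)) x z).trans
      (abs_iteratedDeriv_sub_le (hψ.of_le (mod_cast hk)) (convex_Icc 0 1) (hC _ hk)
        (eval_mem_Icc hx i) (eval_mem_Icc hz i))
  refine ⟨(hψ.continuous.comp (continuous_apply i)).continuousOn, ?_, fun u hu => ?_, ?_⟩
  · have hβ : smoothOrder β ≤ ⌈β⌉₊ := Nat.ceil_mono (sub_le_self β zero_le_one)
    exact ((hψ.of_le (mod_cast hβ)).comp (contDiff_apply ℝ ℝ i)).contDiffOn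
  · refine LipschitzOnWith.uniformContinuousOn
      (LipschitzOnWith.of_dist_le' (K := C) fun x hx z hz => (hlip u hu x hx z hz).trans ?_)
    exact mul_le_mul_of_nonneg_left (dist_le_pi_dist x z i) hC0
  · refine (holderNormOn_le hbound fun u hu x hx z hz => (hlip u hu x hx z hz).trans ?_).trans
      ((ofReal_add hC0 hC0).ge.trans (ofReal_le_ofReal hr))
    have hxz : |x i - z i| ≤ 1 := by
      simpa using abs_sub_le_of_le_of_le (eval_mem_Icc hx i).1 (eval_mem_Icc hx i).2
        (eval_mem_Icc hz i).1 (eval_mem_Icc hz i).2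
    exact mul_le_mul_of_nonneg_left (abs_sub_le_e2_rpow hxz
      (by linarith [Int.ceil_lt_add_one β]) (by linarith [Int.le_ceil β])) hC0

theorem exists_forall_abs_iteratedDeriv_le {ψ : ℝ → ℝ} {N : ℕ} (hψ : ContDiff ℝ N ψ) {s : Set ℝ}
    (hs : IsCompact s) : ∃ C, ∀ k ≤ N, ∀ t ∈ s, |iteratedDeriv k ψ t| ≤ C := by
  have hcont : ContinuousOn (fun t => ∑ k ∈ Finset.range (N + 1), |iteratedDeriv k ψ t|) s :=
    continuousOn_finsetSum _ fun k hk => ((hψ.continuous_iteratedDeriv k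
      (mod_cast Finset.mem_range_succ_iff.1 hk)).abs).continuousOn
  obtain ⟨C, hC⟩ := hs.exists_bound_of_continuousOn hcont
  refine ⟨C, fun k hk t ht => ?_⟩
  calc |iteratedDeriv k ψ t| ≤ ∑ k ∈ Finset.range (N + 1), |iteratedDeriv k ψ t| :=
        Finset.single_le_sum (f := fun k => |iteratedDeriv k ψ t|) (fun _ _ => abs_nonneg _)
          (Finset.mem_range_succ_iff.2 hk)
    _ ≤ C := (le_abs_self _).trans (hC t ht)

theorem eventually_comp_eval_sub_mem_HolderBall {β : ℝ} {ψ : ℝ → ℝ} (hψ : ContDiff ℝ ⌈β⌉₊ ψ) :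
    ∀ᶠ r in Filter.atTop, ∀ a ∈ Icc (0 : ℝ) 1, ∀ (m : ℕ) (i : Fin m),
      (fun x => ψ (x i - a)) ∈ HolderBall m β r := by
  obtain ⟨C, hC⟩ := exists_forall_abs_iteratedDeriv_le hψ (isCompact_Icc (a := -1) (b := 1))
  filter_upwards [Filter.eventually_ge_atTop (C + C)] with r hr a ha m i
  refine comp_eval_mem_HolderBall i (ψ := fun t => ψ (t - a))
    (hψ.comp (contDiff_id.sub contDiff_const)) (fun k hk t ht => ?_) hr
  rw [iteratedDeriv_comp_sub_const]
  exact hC k hk _ ⟨by linarith [ht.1, ha.2], by linarith [ht.2, ha.1]⟩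

/-! ## Compositional classes -/

section Compositional

variable {dstar : ℕ} {β r : ℝ} {ψ : ℝ → ℝ}

theorem exists_strictMono_apply_eq {k m : ℕ} (hk : 0 < k) (hkm : k ≤ m) (i : Fin m) :
    ∃ (e : Fin k → Fin m) (j : Fin k), StrictMono e ∧ e j = i := by
  obtain ⟨s, his, hs⟩ := Finset.exists_superset_card_eq (s := {i}) (n := k) (by simpa)
    (by simpa using hkm)
  obtain ⟨j, hj⟩ : i ∈ range (s.orderEmbOfFin hs) := by
    simpa [Finset.range_orderEmbOfFin] using his
  exact ⟨s.orderEmbOfFin hs, j, (s.orderEmbOfFin hs).strictMono, hj⟩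

theorem comp_eval_mem_GH {m : ℕ} (h0 : 0 < dstar) (hm : dstar ≤ m) (i : Fin m)
    (hψ : ∀ j : Fin dstar, (fun y => ψ (y j)) ∈ HolderBall dstar β r) :
    (fun x => ψ (x i)) ∈ GH m dstar β r := by
  obtain ⟨e, j, he, rfl⟩ := exists_strictMono_apply_eq h0 hm i
  exact ⟨e, fun y => ψ (y j), he, hψ j, fun _ _ => rfl⟩

theorem comp_eval_mem_GCH {K : ℕ} (h0 : 0 < dstar)
    (hid : ∀ j : Fin dstar, (fun y => y j) ∈ HolderBall dstar β r) {q d : ℕ}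
    (hq : dstar * q ≤ K * q) (hd : dstar ≤ d) (i : Fin d)
    (hmaps : MapsTo ψ (Icc 0 1) (Icc 0 1))
    (hψ : ∀ j : Fin dstar, (fun y => ψ (y j)) ∈ HolderBall dstar β r) :
    (fun x => ψ (x i)) ∈ GCH K dstar β r q d := by
  induction q generalizing d ψ with
  | zero => exact ⟨_, comp_eval_mem_GH h0 hd i hψ, fun _ _ => rfl⟩
  | succ q ih =>
    have hK : dstar ≤ K := Nat.le_of_mul_le_mul_right hq q.succ_pos
    let k : Fin K := ⟨0, h0.trans_le hK⟩
    exact ⟨fun x _ => ψ (x i), fun y => y k, fun _ => comp_eval_mem_GH h0 hd i hψ,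
      fun x hx _ _ => hmaps (hx i (mem_univ i)),
      ih (Nat.mul_le_mul_right q hK) hK k (mapsTo_id _) hid, fun _ _ => rfl⟩

theorem eventually_comp_eval_sub_mem_GCH (hψ : ContDiff ℝ ⌈β⌉₊ ψ)
    (hmaps : ∀ t, ψ t ∈ Icc (0 : ℝ) 1) :
    ∀ᶠ r in Filter.atTop, ∀ a ∈ Icc (0 : ℝ) 1, ∀ {q d dstar K : ℕ}, 0 < dstar →
      dstar * q ≤ K * q → dstar ≤ d → ∀ i : Fin d,
      (fun x => ψ (x i - a)) ∈ GCH K dstar β r q d := by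
  filter_upwards [eventually_comp_eval_sub_mem_HolderBall (β := β) contDiff_id,
    eventually_comp_eval_sub_mem_HolderBall hψ] with r hid hψr a ha q d dstar K h0 hq hd i
  exact comp_eval_mem_GCH (ψ := fun t => ψ (t - a)) h0
    (by simpa using hid 0 (by simp) dstar) hq hd i (fun t _ => hmaps _) (hψr a ha dstar)

end Compositional

/-! ## Samples and risks -/

theorem measurePreserving_snoc {α : Type*} [MeasurableSpace α] (μ : Measure α) [SigmaFinite μ]
    (n : ℕ) :
    MeasurePreserving (fun z : (Fin n → α) × α => (Fin.snoc z.1 z.2 : Fin (n + 1) → α))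
      ((Measure.pi fun _ => μ).prod μ) (Measure.pi fun _ => μ) := by
  simp only [← Fin.insertNth_last']
  exact (measurePreserving_piFinSuccAbove (fun _ => μ) (Fin.last n)).symm.comp
    Measure.measurePreserving_swap

theorem iid_eq_pi {α : Type*} [MeasurableSpace α] (μ : Measure α) [SigmaFinite μ] (n : ℕ) :
    iid μ n = Measure.pi fun _ => μ := by
  induction n with
  | zero => exact (Measure.pi_of_empty _ _).symm
  | succ n ih =>
    have hsnoc := measurePreserving_snoc μ n
    have hfactor (p : Fin n → α) : μ.map (fun a => (Fin.snoc p a : Fin (n + 1) → α)) =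
        (μ.map (Prod.mk p)).map fun z => Fin.snoc z.1 z.2 :=
      (Measure.map_map hsnoc.measurable measurable_prodMk_left).symm
    have hkernel : Measurable fun p : Fin n → α =>
        (μ.map (Prod.mk p)).map fun z => (Fin.snoc z.1 z.2 : Fin (n + 1) → α) :=
      (Measure.measurable_map _ hsnoc.measurable).comp Measurable.map_prodMk_left
    ext s hs
    simp only [iid, ih, hfactor]
    rw [Measure.bind_apply hs hkernel.aemeasurable,
      ← hsnoc.measure_preimage hs.nullMeasurableSet, Measure.prod_apply (hsnoc.measurable hs)]
    refine lintegral_congr fun p => ?_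
    rw [Measure.map_apply hsnoc.measurable hs,
      Measure.map_apply measurable_prodMk_left (hsnoc.measurable hs)]

theorem measurable_sgn : Measurable sgn :=
  Measurable.ite measurableSet_Ici measurable_const measurable_const

section Risk

variable {d n : ℕ} (P : Measure ((Fin d → ℝ) × ℝ))

theorem risk01_nonneg (f : (Fin d → ℝ) → ℝ) : 0 ≤ risk01 P f := measureReal_nonneg

theorem bddBelow_range_risk01 :
    BddBelow (range fun g : {g : (Fin d → ℝ) → ℝ // Measurable g} => risk01 P g.1) :=
  ⟨0, forall_mem_range.2 fun _ => risk01_nonneg P _⟩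

theorem bayes01_nonneg : 0 ≤ bayes01 P :=
  Real.iInf_nonneg fun _ => risk01_nonneg P _

variable [IsProbabilityMeasure P]

theorem risk01_le_one (f : (Fin d → ℝ) → ℝ) : risk01 P f ≤ 1 := measureReal_le_one

theorem bayes01_le_one : bayes01 P ≤ 1 :=
  (ciInf_le (bddBelow_range_risk01 P) ⟨fun _ => 0, measurable_const⟩).trans (risk01_le_one P _)

theorem expectedExcess01_le_one (A : Estimator d n) : expectedExcess01 P A ≤ 1 := by
  have hexcess (ω) : ‖excess01 P (A ω)‖ ≤ 1 :=
    abs_sub_le_of_nonneg_of_le (risk01_nonneg P _) (risk01_le_one P _) (bayes01_nonneg P)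
      (bayes01_le_one P)
  rw [expectedExcess01, iid_eq_pi]
  calc ∫ ω, excess01 P (A ω) ∂Measure.pi (fun _ => P)
      ≤ ‖∫ ω, excess01 P (A ω) ∂Measure.pi (fun _ => P)‖ := Real.le_norm_self _
    _ ≤ 1 := by
      simpa using norm_integral_le_of_norm_le_const (μ := Measure.pi fun _ => P)
        (.of_forall hexcess)

theorem measurable_risk01 {A : Estimator d n} (hA : A.Meas) :
    Measurable fun ω => risk01 P (A ω) := by
  have hsgn : Measurable fun z : (Fin n → (Fin d → ℝ) × ℝ) × ((Fin d → ℝ) × ℝ) =>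
      sgn (A z.1 z.2.1) :=
    measurable_sgn.comp (hA.comp (measurable_fst.prodMk measurable_snd.fst))
  exact (measurable_measure_prodMk_left
    (measurableSet_eq_fun hsgn measurable_snd.snd).compl).ennreal_toReal

end Risk

/-! ## Noiseless laws -/

section Noiseless

variable {d : ℕ}

theorem measurable_jointMeasure_kernel {η : (Fin d → ℝ) → ℝ} (hη : Measurable η) :
    Measurable fun x => ENNReal.ofReal (η x) • Measure.dirac (x, (1 : ℝ)) +
      ENNReal.ofReal (1 - η x) • Measure.dirac (x, (-1 : ℝ)) := by
  refine Measure.measurable_of_measurable_coe _ fun s hs => ?_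
  have hdirac (y : ℝ) : Measurable fun x : Fin d → ℝ => Measure.dirac (x, y) s :=
    (Measure.measurable_coe hs).comp (Measure.measurable_dirac.comp measurable_prodMk_right)
  exact (hη.ennreal_ofReal.mul (hdirac 1)).add
    ((measurable_const.sub hη).ennreal_ofReal.mul (hdirac (-1)))

instance DataDist.isProbabilityMeasure_Q (D : DataDist d) : IsProbabilityMeasure D.Q := D.Q_prob

instance DataDist.isProbabilityMeasure_P (D : DataDist d) : IsProbabilityMeasure D.P := by
  refine isProbabilityMeasure_bind (measurable_jointMeasure_kernel D.η_meas).aemeasurable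
    (.of_forall fun x => ⟨?_⟩)
  have hη := D.η_mem x
  simp [← ENNReal.ofReal_add hη.1 (sub_nonneg.2 hη.2)]

/-- The label predicted by the Bayes classifier of `D`. -/
def DataDist.label (D : DataDist d) (x : Fin d → ℝ) : ℝ := sgn (2 * D.η x - 1)

theorem DataDist.measurable_label (D : DataDist d) : Measurable D.label :=
  measurable_sgn.comp ((D.η_meas.const_mul 2).sub_const 1)

/-- An input paired with its Bayes label, an observation of `D` if `D` is noiseless. -/
def DataDist.labelled (D : DataDist d) (x : Fin d → ℝ) : (Fin d → ℝ) × ℝ := (x, D.label x)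

theorem DataDist.measurable_labelled (D : DataDist d) : Measurable D.labelled :=
  measurable_id.prodMk D.measurable_label

theorem DataDist.measurable_labelled_pi (D : DataDist d) (n : ℕ) :
    Measurable fun (x : Fin n → Fin d → ℝ) j => D.labelled (x j) :=
  measurable_pi_lambda _ fun j => D.measurable_labelled.comp (measurable_pi_apply j)

theorem DataDist.measureReal_pi_label_eq (D₀ D₁ : DataDist d) (n : ℕ) :
    (Measure.pi fun _ : Fin n => D₀.Q).real (univ.pi fun _ => {x | D₀.label x = D₁.label x}) =
      (1 - D₀.Q.real {x | D₀.label x ≠ D₁.label x}) ^ n := by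
  have hne : MeasurableSet {x | D₀.label x ≠ D₁.label x} :=
    (measurableSet_eq_fun D₀.measurable_label D₁.measurable_label).compl
  rw [← probReal_compl_eq_one_sub hne, compl_ofPred]
  simp [measureReal_def, Measure.pi_pi]

theorem DataDist.integrable_risk01 (D : DataDist d) {n : ℕ} {A : Estimator d n} (hA : A.Meas)
    (μ : Measure (Fin n → Fin d → ℝ)) [IsFiniteMeasure μ] :
    Integrable (fun x => risk01 D.P (A fun j => D.labelled (x j))) μ :=
  .of_bound ((measurable_risk01 D.P hA).comp (D.measurable_labelled_pi n)).aestronglyMeasurable 1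
    (.of_forall fun x => by
      simpa [abs_of_nonneg (risk01_nonneg D.P _)] using risk01_le_one D.P _)

/-- The label is almost surely a function of the input: the conditional class probability takes
only the values `0` and `1`. -/
def DataDist.IsNoiseless (D : DataDist d) : Prop := ∀ᵐ x ∂D.Q, D.η x = 0 ∨ D.η x = 1

namespace DataDist.IsNoiseless

variable {D D₀ D₁ : DataDist d}

theorem P_eq_map (h : D.IsNoiseless) : D.P = D.Q.map D.labelled := by
  rw [← Measure.bind_dirac_eq_map _ D.measurable_labelled]
  refine Measure.bind_congr_right (h.mono fun x hx => ?_)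
  rcases hx with hx | hx <;> norm_num [hx, DataDist.labelled, DataDist.label, sgn]

theorem risk01_eq (h : D.IsNoiseless) {f : (Fin d → ℝ) → ℝ} (hf : Measurable f) :
    risk01 D.P f = D.Q.real {x | sgn (f x) ≠ D.label x} := by
  have hmis : MeasurableSet {p : (Fin d → ℝ) × ℝ | sgn (f p.1) ≠ p.2} :=
    (measurableSet_eq_fun (measurable_sgn.comp (hf.comp measurable_fst)) measurable_snd).compl
  rw [risk01, h.P_eq_map, Measure.map_apply D.measurable_labelled hmis]
  rfl

theorem bayes01_eq_zero (h : D.IsNoiseless) : bayes01 D.P = 0 := by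
  have hmeas : Measurable fun x => 2 * D.η x - 1 := (D.η_meas.const_mul 2).sub_const 1
  refine le_antisymm ((ciInf_le (bddBelow_range_risk01 D.P) ⟨_, hmeas⟩).trans_eq ?_)
    (bayes01_nonneg D.P)
  simp [h.risk01_eq hmeas, DataDist.label]

theorem expectedExcess01_eq (h : D.IsNoiseless) {n : ℕ} {A : Estimator d n} (hA : A.Meas) :
    expectedExcess01 D.P A =
      ∫ x, risk01 D.P (A fun j => D.labelled (x j)) ∂Measure.pi fun _ => D.Q := by
  have : IsProbabilityMeasure (D.Q.map D.labelled) :=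
    Measure.isProbabilityMeasure_map D.measurable_labelled.aemeasurable
  have hiid : iid D.P n = (Measure.pi fun _ => D.Q).map fun x j => D.labelled (x j) := by
    rw [iid_eq_pi, h.P_eq_map, Measure.pi_map_pi fun _ => D.measurable_labelled.aemeasurable]
  simp only [expectedExcess01, excess01, h.bayes01_eq_zero, sub_zero]
  rw [hiid, integral_map (D.measurable_labelled_pi n).aemeasurable
    (measurable_risk01 D.P hA).aestronglyMeasurable]

theorem measureReal_label_ne_le (h₀ : D₀.IsNoiseless) (h₁ : D₁.IsNoiseless) (hQ : D₀.Q = D₁.Q)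
    {f : (Fin d → ℝ) → ℝ} (hf : Measurable f) :
    D₀.Q.real {x | D₀.label x ≠ D₁.label x} ≤ risk01 D₀.P f + risk01 D₁.P f := by
  rw [h₀.risk01_eq hf, h₁.risk01_eq hf, ← hQ]
  refine (measureReal_mono fun x hx => ?_).trans (measureReal_union_le _ _)
  rcases eq_or_ne (sgn (f x)) (D₀.label x) with h | h
  · exact .inr fun h' => hx (h.symm.trans h')
  · exact .inl h

/- A sample that avoids the region where the labels differ is the same under both laws, so the
estimator answers with the same classifier, whose two risks there add up to at least `p`. -/
theorem two_point_bound (h₀ : D₀.IsNoiseless) (h₁ : D₁.IsNoiseless) (hQ : D₀.Q = D₁.Q) {n : ℕ}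
    {A : Estimator d n} (hA : A.Meas) {p : ℝ}
    (hp : D₀.Q.real {x | D₀.label x ≠ D₁.label x} = p) :
    p * (1 - p) ^ n ≤ expectedExcess01 D₀.P A + expectedExcess01 D₁.P A := by
  set μ : Measure (Fin n → Fin d → ℝ) := Measure.pi fun _ => D₀.Q
  set F : (Fin n → Fin d → ℝ) → ℝ := fun x =>
    risk01 D₀.P (A fun j => D₀.labelled (x j)) + risk01 D₁.P (A fun j => D₁.labelled (x j))
  have hF : Integrable F μ := (D₀.integrable_risk01 hA μ).add (D₁.integrable_risk01 hA μ)
  have hagree : (univ.pi fun _ => {x | D₀.label x = D₁.label x}) ⊆ {x | p ≤ F x} := by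
    intro x hx
    have hsample : (fun j => D₁.labelled (x j)) = fun j => D₀.labelled (x j) :=
      funext fun j => Prod.ext rfl (hx j (mem_univ j)).symm
    have hrisk := measureReal_label_ne_le h₀ h₁ hQ (f := A fun j => D₀.labelled (x j))
      (hA.comp measurable_prodMk_left)
    simpa only [mem_ofPred_eq, F, hsample, hp] using hrisk
  have hp0 : 0 ≤ p := hp ▸ measureReal_nonneg
  calc p * (1 - p) ^ n
      = p * μ.real (univ.pi fun _ => {x | D₀.label x = D₁.label x}) := by
        rw [measureReal_pi_label_eq, hp]
    _ ≤ p * μ.real {x | p ≤ F x} := mul_le_mul_of_nonneg_left (measureReal_mono hagree) hp0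
    _ ≤ ∫ x, F x ∂μ := mul_meas_ge_le_integral_of_nonneg
        (.of_forall fun x => add_nonneg (risk01_nonneg _ _) (risk01_nonneg _ _)) hF p
    _ = expectedExcess01 D₀.P A + expectedExcess01 D₁.P A := by
        rw [h₀.expectedExcess01_eq hA, h₁.expectedExcess01_eq hA, ← hQ]
        exact integral_add (D₀.integrable_risk01 hA μ) (D₁.integrable_risk01 hA μ)

theorem le_minimax (h₀ : D₀.IsNoiseless) (h₁ : D₁.IsNoiseless) (hQ : D₀.Q = D₁.Q) {p : ℝ}
    (hp : D₀.Q.real {x | D₀.label x ≠ D₁.label x} = p) (n : ℕ) {𝒟 : Set (DataDist d)}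
    (hD₀ : D₀ ∈ 𝒟) (hD₁ : D₁ ∈ 𝒟) :
    p * (1 - p) ^ n / 2 ≤
      ⨅ A : {A : Estimator d n // A.Meas}, ⨆ D : 𝒟, expectedExcess01 D.1.P A.1 := by
  have : Nonempty {A : Estimator d n // A.Meas} := ⟨⟨fun _ _ => 0, measurable_const⟩⟩
  refine le_ciInf fun A => ?_
  have hbdd : BddAbove (range fun D : 𝒟 => expectedExcess01 D.1.P A.1) :=
    ⟨1, forall_mem_range.2 fun D => expectedExcess01_le_one D.1.P A.1⟩
  linarith [two_point_bound h₀ h₁ hQ A.2 hp, le_ciSup hbdd ⟨D₀, hD₀⟩, le_ciSup hbdd ⟨D₁, hD₁⟩]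

theorem mem_Tsybakov_top (h : D.IsNoiseless) {α : ℝ} {τ : ℝ≥0∞} (hα : 1 ≤ τ → 1 ≤ α) :
    D ∈ Tsybakov d ∞ α τ := by
  intro t _ htτ
  rcases lt_or_ge t 1 with ht1 | ht1
  · have hnull : D.Q {x | |2 * D.η x - 1| ≤ t} = 0 := by
      refine measure_mono_null (fun x hx => ?_) h
      rintro (hη | hη) <;> norm_num [hη] at hx <;> linarith
    rw [measure_mono_null inter_subset_left hnull]
    exact zero_le
  · have hα1 : 1 ≤ ENNReal.ofReal α :=
      one_le_ofReal.2 (hα ((one_le_ofReal.2 ht1).trans htτ))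
    have hpow : 1 ≤ rpowE (ENNReal.ofReal t) ∞ := by
      have := one_le_ofReal.2 ht1
      simp only [rpowE, if_true, this.not_gt, if_false]
      split_ifs <;> simp
    exact prob_le_one.trans (one_le_mul hα1 hpow)

end DataDist.IsNoiseless

end Noiseless
/-! ## Laws on slabs of the cube -/

section Slab

variable {d : ℕ} (i : Fin d)

/-- The part of the unit cube where the `i`-th coordinate lies in `S`. -/
def slab (S : Set ℝ) : Set (Fin d → ℝ) := {x ∈ cube d | x i ∈ S}

/-- The uniform distribution on `slab i S`; the zero measure if the slab is a null set. -/
def slabLaw (S : Set ℝ) : Measure (Fin d → ℝ) := ProbabilityTheory.cond volume (slab i S)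

theorem slab_eq_pi (S : Set ℝ) :
    slab i S = univ.pi (Function.update (fun _ => Icc 0 1) i (Icc 0 1 ∩ S)) := by
  ext x
  simp only [slab, cube, mem_univ_pi]
  rw [Function.forall_update_iff (fun _ => Icc (0 : ℝ) 1) fun j s => x j ∈ s]
  refine ⟨fun hx => ⟨⟨hx.1 i, hx.2⟩, fun j _ => hx.1 j⟩, fun hx => ⟨fun j => ?_, hx.1.2⟩⟩
  exact if hj : j = i then hj ▸ hx.1.1 else hx.2 j hj

theorem volume_slab (S : Set ℝ) : volume (slab i S) = volume (Icc 0 1 ∩ S) := by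
  rw [slab_eq_pi, volume_pi_pi, ← Finset.prod_erase_mul _ _ (Finset.mem_univ i),
    Finset.prod_eq_one fun j hj => by simp [Finset.ne_of_mem_erase hj]]
  simp

theorem volume_slab_ne_top (S : Set ℝ) : volume (slab i S) ≠ ∞ := by
  rw [volume_slab]
  exact measure_inter_ne_top_of_left_ne_top measure_Icc_lt_top.ne

theorem volume_real_slab (S : Set ℝ) :
    volume.real (slab i S) = volume.real (Icc 0 1 ∩ S) := by
  rw [measureReal_def, volume_slab, measureReal_def]

variable {S : Set ℝ}

theorem measurableSet_slab (hS : MeasurableSet S) : MeasurableSet (slab i S) :=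
  (MeasurableSet.univ_pi fun _ => measurableSet_Icc).inter (measurable_pi_apply i hS)

theorem slabLaw_real_preimage (hS : MeasurableSet S) (T : Set ℝ) :
    (slabLaw i S).real {x | x i ∈ T} =
      (volume.real (slab i S))⁻¹ * volume.real (slab i (S ∩ T)) := by
  have hinter : slab i S ∩ {x | x i ∈ T} = slab i (S ∩ T) := by
    ext x
    exact and_assoc
  rw [measureReal_def, slabLaw, ProbabilityTheory.cond_apply (measurableSet_slab i hS), hinter,
    toReal_mul, toReal_inv, measureReal_def, measureReal_def]

theorem slabLaw_mem_MLam (hS : MeasurableSet S) {Λ : ℝ} (hΛ : 0 < Λ)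
    (hvol : Λ⁻¹ ≤ volume.real (slab i S)) : slabLaw i S ∈ MLam d Λ := by
  set v := volume.real (slab i S)
  have hslab : slab i S ⊆ cube d := sep_subset _ _
  have hv : 0 < v := (inv_pos.2 hΛ).trans_le hvol
  have hinv : (volume (slab i S))⁻¹ = ENNReal.ofReal v⁻¹ := by
    rw [ofReal_inv_of_pos hv, ofReal_measureReal (volume_slab_ne_top i S)]
  refine ⟨(slab i S).indicator fun _ => v⁻¹, measurable_const.indicator (measurableSet_slab i hS),
    fun x => ⟨indicator_nonneg (fun _ _ => (inv_pos.2 hv).le) x, ?_⟩, ?_⟩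
  · exact indicator_apply_le' (fun _ => inv_le_of_inv_le₀ hΛ hvol) fun _ => hΛ.le
  · have hdensity : (fun x => ENNReal.ofReal ((slab i S).indicator (fun _ => v⁻¹) x)) =
        (slab i S).indicator fun _ => ENNReal.ofReal v⁻¹ :=
      (indicator_comp_of_zero ofReal_zero).symm
    rw [hdensity, withDensity_indicator (measurableSet_slab i hS), withDensity_const,
      Measure.restrict_restrict_of_subset hslab, ← hinv]
    rfl

theorem isProbabilityMeasure_slabLaw (hvol : volume (slab i S) ≠ 0) :
    IsProbabilityMeasure (slabLaw i S) :=
  ProbabilityTheory.cond_isProbabilityMeasure_of_finite hvol (volume_slab_ne_top i S)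

theorem slabLaw_cube (hvol : volume (slab i S) ≠ 0) : slabLaw i S (cube d) = 1 := by
  have := isProbabilityMeasure_slabLaw i hvol
  exact prob_le_one.antisymm
    ((ProbabilityTheory.cond_apply_self hvol (volume_slab_ne_top i S)).ge.trans
      (measure_mono (sep_subset _ _)))

variable (hvol : volume (slab i S) ≠ 0)
  {ψ : ℝ → ℝ} (hψ : Measurable ψ) (hψ01 : ∀ t, ψ t ∈ Icc (0 : ℝ) 1)

/-- The law with uniform inputs on a slab and conditional class probability `x ↦ ψ (x i)`. -/
def slabDist : DataDist d where
  η x := ψ (x i)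
  Q := slabLaw i S
  η_meas := hψ.comp (measurable_pi_apply i)
  η_mem x := hψ01 (x i)
  Q_prob := isProbabilityMeasure_slabLaw i hvol
  Q_cube := slabLaw_cube i hvol

theorem slabDist_mem_HCHL (hS : MeasurableSet S) {q K dstar : ℕ} {β r Λ : ℝ}
    (hη : (fun x => ψ (x i)) ∈ GCH K dstar β r q d) (hΛ : 0 < Λ)
    (hdensity : Λ⁻¹ ≤ volume.real (slab i S)) :
    slabDist i hvol hψ hψ01 ∈ HCHL d q K dstar β r Λ :=
  ⟨⟨_, hη, fun x _ => hψ01 (x i), .of_forall fun _ => rfl⟩, slabLaw_mem_MLam i hS hΛ hdensity⟩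

theorem isNoiseless_slabDist (hS : MeasurableSet S) (h01 : ∀ t ∈ S, ψ t = 0 ∨ ψ t = 1) :
    (slabDist i hvol hψ hψ01).IsNoiseless :=
  ProbabilityTheory.ae_cond_of_forall_mem (measurableSet_slab i hS) fun x hx => h01 (x i) hx.2

end Slab

/-! ## Two laws with a gap -/

/-- A smooth transition from `0` on `(-∞, 0]` to `1` on `[w, ∞)`, where `0 < w`. -/
def ramp (w t : ℝ) : ℝ := Real.smoothTransition (t / w)

theorem ramp_mem_Icc (w t : ℝ) : ramp w t ∈ Icc (0 : ℝ) 1 :=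
  ⟨Real.smoothTransition.nonneg _, Real.smoothTransition.le_one _⟩

theorem contDiff_ramp (w : ℝ) (k : ℕ) : ContDiff ℝ k (ramp w) :=
  (Real.smoothTransition.contDiff (n := k)).comp (contDiff_id.div_const w)

theorem ramp_of_nonpos {w t : ℝ} (hw : 0 < w) (ht : t ≤ 0) : ramp w t = 0 :=
  Real.smoothTransition.zero_of_nonpos (div_nonpos_of_nonpos_of_nonneg ht hw.le)

theorem ramp_of_le {w t : ℝ} (hw : 0 < w) (ht : w ≤ t) : ramp w t = 1 :=
  Real.smoothTransition.one_of_one_le ((one_le_div hw).2 ht)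

section Gap

variable {d : ℕ} (i : Fin d) {a w : ℝ}

theorem ramp_sub_of_mem_compl_Ioo (hw : 0 < w) {t : ℝ} (ht : t ∈ (Ioo a (a + w))ᶜ) :
    ramp w (t - a) = if t ≤ a then 0 else 1 := by
  split_ifs with h
  · exact ramp_of_nonpos hw (sub_nonpos.2 h)
  · exact ramp_of_le hw (le_sub_iff_add_le'.2 (not_lt.1 fun h' => ht ⟨not_le.1 h, h'⟩))

theorem volume_real_slab_compl_Ioo (ha : 0 ≤ a) (hw : 0 ≤ w) (haw : a + w ≤ 1) :
    volume.real (slab i (Ioo a (a + w))ᶜ) = 1 - w := by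
  have hsub : Ioo a (a + w) ⊆ Icc 0 1 := fun t ht => ⟨ha.trans ht.1.le, ht.2.le.trans haw⟩
  have hsplit := measureReal_sdiff_add_inter (μ := volume) (s := Icc 0 1)
    (measurableSet_Ioo (a := a) (b := a + w)) measure_Icc_lt_top.ne
  rw [inter_eq_self_of_subset_right hsub, sdiff_eq, Real.volume_real_Icc_of_le zero_le_one,
    Real.volume_real_Ioo_of_le (by linarith)] at hsplit
  rw [volume_real_slab]
  linarith

theorem slabLaw_compl_Ioo_real_le (ha : 0 ≤ a) (hw : 0 ≤ w) (haw : a + w ≤ 1) :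
    (slabLaw i (Ioo a (a + w))ᶜ).real {x | x i ≤ a} = a / (1 - w) := by
  have hleft : Icc 0 1 ∩ ((Ioo a (a + w))ᶜ ∩ Iic a) = Icc 0 a := by
    ext t
    simp only [mem_inter_iff, mem_Icc, mem_compl_iff, mem_Ioo, mem_Iic]
    grind
  have hpre := slabLaw_real_preimage i (measurableSet_Ioo (a := a) (b := a + w)).compl (Iic a)
  rw [volume_real_slab_compl_Ioo i ha hw haw, volume_real_slab, hleft,
    Real.volume_real_Icc_of_le ha, sub_zero, inv_mul_eq_div] at hpre
  exact hpre

theorem volume_slab_compl_Ioo_ne_zero (ha : 0 ≤ a) (hw : 0 ≤ w) (hw1 : w < 1) (haw : a + w ≤ 1) :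
    volume (slab i (Ioo a (a + w))ᶜ) ≠ 0 := by
  rw [← measureReal_ne_zero_iff (volume_slab_ne_top i _), volume_real_slab_compl_Ioo i ha hw haw]
  linarith

variable (ha : 0 ≤ a) (hw : 0 < w) (hw1 : w < 1) (haw : a + w ≤ 1)

/-- Inputs avoid the gap `Ioo a (a + w)` in the `i`-th coordinate and all labels are `1`. -/
def constDist : DataDist d :=
  slabDist i (volume_slab_compl_Ioo_ne_zero i ha hw.le hw1 haw) (ψ := fun _ => 1)
    measurable_const (fun _ => by simp)

/-- Inputs avoid the gap `Ioo a (a + w)` in the `i`-th coordinate, across which the label switches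
from `-1` to `1`. -/
def switchDist : DataDist d :=
  slabDist i (volume_slab_compl_Ioo_ne_zero i ha hw.le hw1 haw) (ψ := fun t => ramp w (t - a))
    ((contDiff_ramp w 0).continuous.measurable.comp (measurable_id.sub_const a))
    (fun t => ramp_mem_Icc w (t - a))

theorem isNoiseless_constDist : (constDist i ha hw hw1 haw).IsNoiseless :=
  .of_forall fun _ => .inr rfl

theorem isNoiseless_switchDist : (switchDist i ha hw hw1 haw).IsNoiseless :=
  isNoiseless_slabDist i _ _ _ measurableSet_Ioo.compl fun t ht => by
    rw [ramp_sub_of_mem_compl_Ioo hw ht]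
    split_ifs <;> simp

theorem measureReal_label_constDist_ne_switchDist :
    (constDist i ha hw hw1 haw).Q.real {x | (constDist i ha hw hw1 haw).label x ≠
      (switchDist i ha hw hw1 haw).label x} = a / (1 - w) := by
  rw [← slabLaw_compl_Ioo_real_le i ha hw.le haw]
  refine measureReal_congr ((ProbabilityTheory.ae_cond_mem
    (measurableSet_slab i measurableSet_Ioo.compl)).mono fun x hx => propext ?_)
  have hramp := ramp_sub_of_mem_compl_Ioo hw hx.2
  change sgn (2 * 1 - 1) ≠ sgn (2 * ramp w (x i - a) - 1) ↔ x i ≤ a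
  rw [hramp]
  split_ifs with h <;> norm_num [sgn, h]

end Gap

/-! ## The minimax lower bound -/

theorem half_le_one_sub_pow {n : ℕ} (hn : 0 < n) : (1 / 2 : ℝ) ≤ (1 - 1 / (2 * n)) ^ n := by
  have hn1 : (1 : ℝ) ≤ n := mod_cast hn
  have hp : 1 / (2 * n : ℝ) ≤ 1 := by rw [div_le_one (by linarith)]; linarith
  calc (1 / 2 : ℝ) = 1 + n * (-(1 / (2 * n))) := by field_simp; norm_num
    _ ≤ (1 + -(1 / (2 * n))) ^ n := one_add_mul_le_pow (by linarith) n
    _ = (1 - 1 / (2 * n)) ^ n := by rw [← sub_eq_add_neg]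

theorem one_div_le_minimax {q d dstar K n : ℕ} {α β r Λ : ℝ} {τ : ℝ≥0∞} (hΛ : 1 < Λ)
    (hn : 0 < n) (hατ : 1 ≤ τ → 1 ≤ α) (i : Fin d)
    (hone : (fun _ => 1) ∈ GCH K dstar β r q d)
    (hramp : ∀ a ∈ Icc (0 : ℝ) 1, (fun x => ramp (1 - Λ⁻¹) (x i - a)) ∈ GCH K dstar β r q d) :
    1 / (8 * n) ≤ ⨅ A : {A : Estimator d n // A.Meas},
      ⨆ D : ↥(HCHL d q K dstar β r Λ ∩ Tsybakov d ∞ α τ), expectedExcess01 D.1.P A.1 := by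
  have hΛ0 : 0 < Λ := one_pos.trans hΛ
  have hn1 : (1 : ℝ) ≤ n := mod_cast hn
  have hΛinv : 0 < Λ⁻¹ := inv_pos.2 hΛ0
  have hw : 0 < 1 - Λ⁻¹ := sub_pos.2 (inv_lt_one_of_one_lt₀ hΛ)
  have hw1 : 1 - Λ⁻¹ < 1 := sub_lt_self 1 hΛinv
  have ha : 0 ≤ Λ⁻¹ / (2 * n) := by positivity
  have haΛ : Λ⁻¹ / (2 * n) ≤ Λ⁻¹ := div_le_self hΛinv.le (by linarith)
  have haw : Λ⁻¹ / (2 * n) + (1 - Λ⁻¹) ≤ 1 := by linarith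
  have hdensity : Λ⁻¹ ≤
      volume.real (slab i (Ioo (Λ⁻¹ / (2 * n)) (Λ⁻¹ / (2 * n) + (1 - Λ⁻¹)))ᶜ) := by
    rw [volume_real_slab_compl_Ioo i ha hw.le haw, _root_.sub_sub_cancel]
  have h₀ := isNoiseless_constDist i ha hw hw1 haw
  have h₁ := isNoiseless_switchDist i ha hw hw1 haw
  have hmem₀ : constDist i ha hw hw1 haw ∈ HCHL d q K dstar β r Λ ∩ Tsybakov d ∞ α τ :=
    ⟨slabDist_mem_HCHL i _ _ _ measurableSet_Ioo.compl hone hΛ0 hdensity,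
      h₀.mem_Tsybakov_top hατ⟩
  have hmem₁ : switchDist i ha hw hw1 haw ∈ HCHL d q K dstar β r Λ ∩ Tsybakov d ∞ α τ :=
    ⟨slabDist_mem_HCHL i _ _ _ measurableSet_Ioo.compl (hramp _ ⟨ha, by linarith⟩) hΛ0 hdensity,
      h₁.mem_Tsybakov_top hατ⟩
  have hp : Λ⁻¹ / (2 * n) / (1 - (1 - Λ⁻¹)) = 1 / (2 * n) := by field_simp; simp
  calc 1 / (8 * n : ℝ) = 1 / (2 * n) * (1 / 2) / 2 := by field_simp; norm_num
    _ ≤ 1 / (2 * n) * (1 - 1 / (2 * n)) ^ n / 2 := by gcongr; exact half_le_one_sub_pow hn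
    _ ≤ _ := h₀.le_minimax h₁ rfl
      ((measureReal_label_constDist_ne_switchDist i ha hw hw1 haw).trans hp) n hmem₀ hmem₁

theorem statement_8_general (β Λ : ℝ) (hΛ : 1 < Λ) :
    ∃ c : ℝ, 0 < c ∧
      ∀ (q d dstar K : ℕ), 0 < dstar → ∀ (α : ℝ) (τ : ℝ≥0∞),
        dstar * q ≤ K * q → dstar ≤ d → ¬(α < 1 ∧ 1 ≤ τ) →
        ∀ (r : ℝ), c ≤ r → ∀ (n : ℕ), 0 < n →
        (⨅ A : {A : Estimator d n // A.Meas},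
            ⨆ D : ↥(HCHL d q K dstar β r Λ ∩ Tsybakov d ∞ α τ),
              expectedExcess01 D.1.P A.1) ≥ 1 / (8 * n) := by
  obtain ⟨c, hc⟩ := Filter.eventually_atTop.1 <| (Filter.eventually_gt_atTop 0).and <|
    (eventually_comp_eval_sub_mem_GCH (β := β) (ψ := fun _ => 1) contDiff_const (by simp)).and <|
    eventually_comp_eval_sub_mem_GCH (β := β) (contDiff_ramp (1 - Λ⁻¹) _) (ramp_mem_Icc _)
  refine ⟨c, (hc c le_rfl).1, fun q d dstar K h0 α τ hq hd hατ r hr n hn => ?_⟩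
  obtain ⟨-, hone, hramp⟩ := hc r hr
  let i : Fin d := ⟨0, h0.trans_le hd⟩
  exact one_div_le_minimax hΛ hn (fun hτ => not_lt.1 fun hα => hατ ⟨hα, hτ⟩) i
    (hone 0 (by simp) h0 hq hd i) fun a ha => hramp a ha h0 hq hd i

/-- Theorem 6.2 : minimax lower bound for `s = ∞`. -/
theorem statement_8
    (β Λ : ℝ) (hβ : 0 < β) (hΛ : 1 < Λ) :
    ∃ c : ℝ, 0 < c ∧
      ∀ (q d dstar K : ℕ), 0 < d → 0 < dstar → 0 < K →
        ∀ (α : ℝ), 0 < α → ∀ (τ : ℝ≥0∞), 0 < τ →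
        dstar * q ≤ K * q → dstar ≤ d → ¬(α < 1 ∧ 1 ≤ τ) →
        ∀ (r : ℝ), c ≤ r → ∀ (n : ℕ), 1 / (Λ - 1) ≤ (n : ℝ) →
        (⨅ A : {A : Estimator d n // A.Meas},
            ⨆ D : ↥(HCHL d q K dstar β r Λ ∩ Tsybakov d ∞ α τ),
              expectedExcess01 D.1.P A.1) ≥ 1 / (32 * n) := by
  obtain ⟨c, hc0, hc⟩ := statement_8_general β Λ hΛ
  refine ⟨c, hc0, fun q d dstar K _ h0 _ α _ τ _ hq hd hατ r hr n hn => ?_⟩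
  have hn0 : (0 : ℝ) < n := (one_div_pos.2 (sub_pos.2 hΛ)).trans_le hn
  exact (hc q d dstar K h0 α τ hq hd hατ r hr n (mod_cast hn0)).le.trans' (by gcongr; norm_num)

end ZZS
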